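/- The function φ(z) = exp(−z − γ − e^{−(z+γ)}) is a probability density on ℝ whose cumulative distribution function is z ↦ exp(−e^{−(z+γ)}); it has mean zero, ∫_{ℝ} z φ(z) dz = 0, and variance π²/6, ∫_{ℝ} z² φ(z) dz = π²/6. -/

import Mathlib

open MeasureTheory Real

/-- The standardized univariate Gumbel density `φ(z) = exp(−z − γ − e^{−(z+γ)})`. -/
noncomputable def gumbelPdf (z : ℝ) : ℝ :=
  Real.exp (-z - Real.eulerMascheroniConstant - Real.exp (-(z + Real.eulerMascheroniConstant)))

/-- The multivariate Gumbel density `φ(z; μ, σ) = ∏_j (1/σ) φ((z_j − μ_j)/σ)`. -/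
noncomputable def mGumbelPdf {J : ℕ} (μ : Fin J → ℝ) (σ : ℝ) (z : Fin J → ℝ) : ℝ :=
  ∏ j, (1 / σ) * gumbelPdf ((z j - μ j) / σ)

/-!
If `X` is exponential of rate `1`, then `-log X - γ` has density `gumbelPdf`: this is the
substitution `x = exp (-(z + γ))`. Under the gamma distribution of shape `a` and rate `1` the moment
generating function of `log` is `t ↦ Γ(a + t) / Γ(a)`, so the moments of `log X` are the derivatives
of `Γ` at `1`. The first is `-γ`. Twice the variance `Γ''(1) - Γ'(1)²` is the second derivative at
`0` of `t ↦ Γ(1 + t) Γ(1 - t)`, which by Euler's reflection formula is `t ↦ 1 / sinc (π t)`.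
-/

open ProbabilityTheory Set Filter Topology
open scoped NNReal

section Reflection

lemma iteratedDeriv_two_comp_const_add_mul_comp_const_sub {𝕜 𝔸 : Type*}
    [NontriviallyNormedField 𝕜] [NormedCommRing 𝔸] [NormedAlgebra 𝕜 𝔸] {f : 𝕜 → 𝔸} {a : 𝕜}
    (hf : ContDiffAt 𝕜 2 f a) :
    iteratedDeriv 2 (fun t ↦ f (a + t) * f (a - t)) 0 =
      2 * (f a * iteratedDeriv 2 f a - deriv f a ^ 2) := by
  have hadd : ContDiffAt 𝕜 2 (fun t ↦ f (a + t)) 0 :=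
    ContDiffAt.comp 0 (by simpa using hf) (by fun_prop)
  have hsub : ContDiffAt 𝕜 2 (fun t ↦ f (a - t)) 0 :=
    ContDiffAt.comp 0 (by simpa using hf) (by fun_prop)
  rw [iteratedDeriv_fun_mul hadd hsub]
  simp only [iteratedDeriv_comp_const_add, iteratedDeriv_comp_const_sub, Finset.sum_range_succ,
    Finset.sum_range_zero, iteratedDeriv_zero, iteratedDeriv_one, add_zero, sub_zero,
    Nat.choose_zero_right, Nat.choose_one_right, Nat.choose_self, Nat.sub_zero, Nat.sub_self,
    Nat.reduceAdd, Nat.reduceSub, Nat.cast_one, Nat.cast_ofNat, pow_one, pow_zero, one_smul,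
    neg_smul, even_two, Even.neg_pow, one_pow]
  ring

lemma sinc_mul_self (x : ℝ) : sinc x * x = sin x := by
  rcases eq_or_ne x 0 with rfl | hx
  · simp
  · rw [sinc_of_ne_zero hx, div_mul_cancel₀ _ hx]

lemma analyticAt_sinc_zero : AnalyticAt ℝ sinc 0 := by
  obtain ⟨p, hp⟩ := analyticAt_sin (x := (0 : ℝ))
  exact sinc_eq_dslope ▸ hp.has_fpower_series_dslope_fslope.analyticAt

lemma analyticAt_inv_sinc_const_mul_zero (c : ℝ) : AnalyticAt ℝ (fun t ↦ (sinc (c * t))⁻¹) 0 := by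
  have hsinc : AnalyticAt ℝ sinc (c * 0) := by simpa using analyticAt_sinc_zero
  exact (hsinc.comp (f := fun t ↦ c * t) (by fun_prop)).inv (by simp)

lemma inv_sinc_mul_sin_eventuallyEq (c : ℝ) :
    (fun t ↦ (sinc (c * t))⁻¹ * sin (c * t)) =ᶠ[𝓝 0] fun t ↦ c * t := by
  have hsinc : ∀ᶠ t in 𝓝 0, sinc (c * t) ≠ 0 :=
    (continuous_sinc.comp (continuous_const_mul c)).continuousAt.eventually_ne (by simp)
  filter_upwards [hsinc] with t ht
  rw [← sinc_mul_self, inv_mul_cancel_left₀ ht]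

lemma iteratedDeriv_two_inv_sinc_const_mul (c : ℝ) :
    iteratedDeriv 2 (fun t ↦ (sinc (c * t))⁻¹) 0 = c ^ 2 / 3 := by
  rcases eq_or_ne c 0 with rfl | hc
  · simp [iteratedDeriv_const]
  set f : ℝ → ℝ := fun t ↦ (sinc (c * t))⁻¹ with hf
  have hsin (n : ℕ) : iteratedDeriv n (fun t ↦ sin (c * t)) 0 = c ^ n * iteratedDeriv n sin 0 := by
    simpa using congrFun (iteratedDeriv_comp_const_mul (n := n) contDiff_sin c) 0
  -- The third derivative of `f t * sin (c * t) = c * t`: as `sin` and `sin''` vanish at `0`, only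
  -- `f''` and `f` survive in the Leibniz formula.
  have hleibniz : ∑ i ∈ Finset.range 4, Nat.choose 3 i * iteratedDeriv i f 0 *
      (c ^ (3 - i) * iteratedDeriv (3 - i) sin 0) = 0 := by
    simp_rw [← hsin]
    rw [← iteratedDeriv_fun_mul (analyticAt_inv_sinc_const_mul_zero c).contDiffAt (by fun_prop),
      (inv_sinc_mul_sin_eventuallyEq c).iteratedDeriv_eq]
    simp [iteratedDeriv_succ]
  have hsolve : -c ^ 3 + 3 * iteratedDeriv 2 f 0 * c = 0 := by
    have hf_zero : f 0 = 1 := by simp [hf]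
    simpa [Finset.sum_range_succ, iteratedDeriv_succ, Nat.choose, hf_zero] using hleibniz
  refine mul_right_cancel₀ hc ?_
  linear_combination hsolve / 3

lemma Gamma_one_add_mul_Gamma_one_sub (t : ℝ) :
    Gamma (1 + t) * Gamma (1 - t) = (sinc (π * t))⁻¹ := by
  rcases eq_or_ne t 0 with rfl | ht
  · simp
  rw [add_comm, Gamma_add_one ht, mul_assoc, Gamma_mul_Gamma_one_sub,
    sinc_of_ne_zero (by positivity), inv_div, mul_div_assoc', mul_comm t]

end Reflection

section LogGamma

variable {a r t : ℝ}

lemma gammaMeasure_eq_withDensity_restrict_Ioi (a r : ℝ) :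
    gammaMeasure a r = (volume.restrict (Ioi 0)).withDensity
      fun x ↦ ENNReal.ofReal (r ^ a / Gamma a * x ^ (a - 1) * exp (-(r * x))) := by
  have hpdf : gammaPDF a r = (Ici 0).indicator
      fun x ↦ ENNReal.ofReal (r ^ a / Gamma a * x ^ (a - 1) * exp (-(r * x))) := by
    ext x
    by_cases hx : 0 ≤ x <;> simp [gammaPDF_eq, hx]
  rw [gammaMeasure, hpdf, withDensity_indicator measurableSet_Ici, restrict_Ioi_eq_restrict_Ici]

lemma integral_gammaMeasure {E : Type*} [NormedAddCommGroup E] [NormedSpace ℝ E]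
    (ha : 0 < a) (hr : 0 < r) (f : ℝ → E) :
    ∫ x, f x ∂gammaMeasure a r =
      ∫ x in Ioi 0, (r ^ a / Gamma a * x ^ (a - 1) * exp (-(r * x))) • f x := by
  rw [gammaMeasure_eq_withDensity_restrict_Ioi,
    integral_withDensity_eq_integral_toReal_smul (by fun_prop) (by simp)]
  refine setIntegral_congr_fun measurableSet_Ioi fun x (hx : 0 < x) ↦ ?_
  have hpdf : 0 ≤ r ^ a / Gamma a * x ^ (a - 1) * exp (-(r * x)) := by positivity
  simp only [ENNReal.toReal_ofReal hpdf]

lemma mgf_log_gammaMeasure (ha : 0 < a) (hr : 0 < r) (ht : -a < t) :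
    mgf log (gammaMeasure a r) t = Gamma (a + t) / (Gamma a * r ^ t) := by
  have hat : 0 < a + t := neg_lt_iff_pos_add'.mp ht
  calc mgf log (gammaMeasure a r) t
      = ∫ x in Ioi 0, r ^ a / Gamma a * (x ^ (a + t - 1) * exp (-(r * x))) := by
        rw [mgf, integral_gammaMeasure ha hr]
        refine setIntegral_congr_fun measurableSet_Ioi fun x (hx : 0 < x) ↦ ?_
        simp only [smul_eq_mul, add_sub_right_comm, rpow_add hx, rpow_def_of_pos hx t, mul_comm t]
        ring
    _ = r ^ a / Gamma a * ((1 / r) ^ (a + t) * Gamma (a + t)) := by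
        rw [integral_const_mul, integral_rpow_mul_exp_neg_mul_Ioi hat hr]
    _ = Gamma (a + t) / (Gamma a * r ^ t) := by
        rw [one_div, inv_rpow hr.le, rpow_add hr]
        field_simp

lemma integrable_exp_mul_log_gammaMeasure (ha : 0 < a) (hr : 0 < r) (ht : -a < t) :
    Integrable (fun x ↦ exp (t * log x)) (gammaMeasure a r) := by
  -- A nonintegrable function would have integral `0`, but the mgf is positive.
  refine .of_integral_ne_zero ?_
  rw [← mgf, mgf_log_gammaMeasure ha hr ht]
  have := Gamma_pos_of_pos ha
  have := Gamma_pos_of_pos (neg_lt_iff_pos_add'.mp ht)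
  positivity

lemma zero_mem_interior_integrableExpSet_log_gammaMeasure (ha : 0 < a) (hr : 0 < r) :
    0 ∈ interior (integrableExpSet log (gammaMeasure a r)) :=
  mem_interior.mpr ⟨Ioi (-a), fun _ ↦ integrable_exp_mul_log_gammaMeasure ha hr, isOpen_Ioi,
    neg_lt_zero.mpr ha⟩

lemma memLp_log_gammaMeasure (ha : 0 < a) (hr : 0 < r) (p : ℝ≥0) :
    MemLp log p (gammaMeasure a r) :=
  memLp_of_mem_interior_integrableExpSet
    (zero_mem_interior_integrableExpSet_log_gammaMeasure ha hr) p

lemma Gamma_const_add_eventuallyEq_mgf (ha : 0 < a) :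
    (fun t ↦ Gamma (a + t)) =ᶠ[𝓝 0] fun t ↦ Gamma a * mgf log (gammaMeasure a 1) t := by
  filter_upwards [Ioi_mem_nhds (neg_lt_zero.mpr ha)] with t ht
  rw [mgf_log_gammaMeasure ha one_pos ht, one_rpow, mul_one,
    mul_div_cancel₀ _ (Gamma_pos_of_pos ha).ne']

lemma analyticAt_Gamma (ha : 0 < a) : AnalyticAt ℝ Gamma a := by
  have hmgf := analyticAt_mgf (zero_mem_interior_integrableExpSet_log_gammaMeasure ha one_pos)
  have hshift : AnalyticAt ℝ (fun t ↦ Gamma (a + t)) (a - a) := by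
    rw [sub_self]
    exact (analyticAt_const.mul hmgf).congr (Gamma_const_add_eventuallyEq_mgf ha).symm
  simpa [Function.comp_def] using hshift.comp (f := fun s ↦ s - a) (by fun_prop)

lemma iteratedDeriv_Gamma_eq_mul_integral_log_pow (ha : 0 < a) (n : ℕ) :
    iteratedDeriv n Gamma a = Gamma a * ∫ x, log x ^ n ∂gammaMeasure a 1 := by
  calc iteratedDeriv n Gamma a
      = iteratedDeriv n (fun t ↦ Gamma (a + t)) 0 := by simp [iteratedDeriv_comp_const_add]
    _ = Gamma a * iteratedDeriv n (mgf log (gammaMeasure a 1)) 0 := by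
        rw [(Gamma_const_add_eventuallyEq_mgf ha).iteratedDeriv_eq, iteratedDeriv_const_mul_field]
    _ = Gamma a * ∫ x, log x ^ n ∂gammaMeasure a 1 := by
        rw [iteratedDeriv_mgf_zero
          (zero_mem_interior_integrableExpSet_log_gammaMeasure ha one_pos)]
        simp only [Pi.pow_apply]

lemma iteratedDeriv_two_Gamma_one :
    iteratedDeriv 2 Gamma 1 = eulerMascheroniConstant ^ 2 + π ^ 2 / 6 := by
  have hreflect :=
    iteratedDeriv_two_comp_const_add_mul_comp_const_sub (analyticAt_Gamma one_pos).contDiffAt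
  simp_rw [Gamma_one_add_mul_Gamma_one_sub] at hreflect
  rw [iteratedDeriv_two_inv_sinc_const_mul, Gamma_one, hasDerivAt_Gamma_one.deriv] at hreflect
  linear_combination -hreflect / 2

lemma integral_log_expMeasure_one : ∫ x, log x ∂expMeasure 1 = -eulerMascheroniConstant := by
  simpa [expMeasure, hasDerivAt_Gamma_one.deriv] using
    (iteratedDeriv_Gamma_eq_mul_integral_log_pow one_pos 1).symm

lemma integral_log_sq_expMeasure_one :
    ∫ x, log x ^ 2 ∂expMeasure 1 = eulerMascheroniConstant ^ 2 + π ^ 2 / 6 := by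
  simpa [expMeasure, iteratedDeriv_two_Gamma_one] using
    (iteratedDeriv_Gamma_eq_mul_integral_log_pow one_pos 2).symm

lemma variance_log_expMeasure_one : Var[log; expMeasure 1] = π ^ 2 / 6 := by
  have := isProbabilityMeasure_expMeasure one_pos
  have hmem : MemLp log 2 (expMeasure 1) := memLp_log_gammaMeasure one_pos one_pos 2
  rw [variance_eq_sub hmem, integral_log_expMeasure_one]
  simp only [Pi.pow_apply, integral_log_sq_expMeasure_one]
  ring

end LogGamma

section Gumbel

variable {E : Type*} [NormedAddCommGroup E] [NormedSpace ℝ E]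

lemma setIntegral_exp_neg_add_smul_comp {s : Set ℝ} (hs : MeasurableSet s) (c : ℝ) (g : ℝ → E) :
    ∫ z in s, exp (-(z + c)) • g (exp (-(z + c))) =
      ∫ x in (fun z ↦ exp (-(z + c))) '' s, g x := by
  have hderiv (z : ℝ) : HasDerivAt (fun z ↦ exp (-(z + c))) (-exp (-(z + c))) z := by
    simpa using ((hasDerivAt_id z).add_const c).neg.exp
  have hinj : InjOn (fun z ↦ exp (-(z + c))) s := fun x _ y _ h ↦ by simpa using h
  rw [integral_image_eq_integral_abs_deriv_smul hs (fun z _ ↦ (hderiv z).hasDerivWithinAt) hinj]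
  simp only [abs_neg, abs_exp]

lemma gumbelPdf_eq_mul (z : ℝ) :
    gumbelPdf z = exp (-(z + eulerMascheroniConstant)) *
      exp (-exp (-(z + eulerMascheroniConstant))) := by
  rw [← exp_add, gumbelPdf]
  ring_nf

lemma setIntegral_gumbelPdf_smul {s : Set ℝ} (hs : MeasurableSet s) (g : ℝ → E) :
    ∫ z in s, gumbelPdf z • g z =
      ∫ x in (fun z ↦ exp (-(z + eulerMascheroniConstant))) '' s,
        exp (-x) • g (-log x - eulerMascheroniConstant) := by
  rw [← setIntegral_exp_neg_add_smul_comp hs]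
  simp only [gumbelPdf_eq_mul, mul_smul, log_exp, neg_neg, add_sub_cancel_right]

lemma integral_gumbelPdf_smul (g : ℝ → E) :
    ∫ z, gumbelPdf z • g z = ∫ x, g (-log x - eulerMascheroniConstant) ∂expMeasure 1 := by
  have himage : (fun z ↦ exp (-(z + eulerMascheroniConstant))) '' univ = Ioi 0 := by
    rw [image_univ, ← range_exp]
    exact (neg_surjective.comp (add_right_surjective _)).range_comp exp
  rw [← setIntegral_univ, setIntegral_gumbelPdf_smul .univ, himage, expMeasure,
    integral_gammaMeasure one_pos one_pos]
  simp

lemma integral_gumbelPdf : ∫ z, gumbelPdf z = 1 := by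
  have := isProbabilityMeasure_expMeasure one_pos
  simpa using integral_gumbelPdf_smul fun _ ↦ (1 : ℝ)

lemma setIntegral_Iic_gumbelPdf (z : ℝ) :
    ∫ x in Iic z, gumbelPdf x = exp (-exp (-(z + eulerMascheroniConstant))) := by
  have himage : (fun z ↦ exp (-(z + eulerMascheroniConstant))) '' Iic z =
      Ici (exp (-(z + eulerMascheroniConstant))) := by
    rw [← image_image exp, ← image_image Neg.neg]
    simp
  have hsubst := setIntegral_gumbelPdf_smul (measurableSet_Iic (a := z)) fun _ ↦ (1 : ℝ)
  simp only [smul_eq_mul, mul_one] at hsubst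
  rw [hsubst, himage, integral_Ici_eq_integral_Ioi, integral_exp_neg_Ioi]

lemma integral_id_mul_gumbelPdf : ∫ z, z * gumbelPdf z = 0 := by
  have := isProbabilityMeasure_expMeasure one_pos
  have hlog : Integrable log (expMeasure 1) :=
    memLp_one_iff_integrable.mp (memLp_log_gammaMeasure one_pos one_pos 1)
  calc ∫ z, z * gumbelPdf z
      = ∫ x, (-log x - eulerMascheroniConstant) ∂expMeasure 1 := by
        simpa only [smul_eq_mul, mul_comm] using integral_gumbelPdf_smul fun z ↦ z
    _ = -(∫ x, log x ∂expMeasure 1) - eulerMascheroniConstant := by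
        rw [integral_sub hlog.fun_neg (integrable_const _), integral_neg]
        simp
    _ = 0 := by rw [integral_log_expMeasure_one, neg_neg, sub_self]

lemma integral_sq_mul_gumbelPdf : ∫ z, z ^ 2 * gumbelPdf z = π ^ 2 / 6 := by
  calc ∫ z, z ^ 2 * gumbelPdf z
      = ∫ x, (-log x - eulerMascheroniConstant) ^ 2 ∂expMeasure 1 := by
        simpa only [smul_eq_mul, mul_comm] using integral_gumbelPdf_smul fun z ↦ z ^ 2
    _ = ∫ x, (log x - ∫ y, log y ∂expMeasure 1) ^ 2 ∂expMeasure 1 := by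
        rw [integral_log_expMeasure_one]
        congr with x
        ring
    _ = Var[log; expMeasure 1] := (variance_eq_integral (by fun_prop)).symm
    _ = π ^ 2 / 6 := variance_log_expMeasure_one

end Gumbel

/-- The standardized Gumbel density: it is a probability density with cdf
`z ↦ exp(−e^{−(z+γ)})`, mean zero and variance `π²/6`. -/
theorem gumbel_density_properties :
    (∀ z, 0 < gumbelPdf z) ∧
    (∫ z, gumbelPdf z) = 1 ∧
    (∀ z, (∫ x in Set.Iic z, gumbelPdf x) =
      Real.exp (-Real.exp (-(z + Real.eulerMascheroniConstant)))) ∧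
    (∫ z, z * gumbelPdf z) = 0 ∧
    (∫ z, z ^ 2 * gumbelPdf z) = Real.pi ^ 2 / 6 :=
  ⟨fun _ ↦ exp_pos _, integral_gumbelPdf, setIntegral_Iic_gumbelPdf, integral_id_mul_gumbelPdf,
    integral_sq_mul_gumbelPdf⟩
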